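/- Let N, K be positive integers with K ≥ N, let v, w : ℤ → ℂ be finitely supported with A_{v,w}(0,0) = 1, let D ≥ 0 and let r_0 = 1, d_0 = 0 and r_1,…,r_D ∈ ℂ, d_1,…,d_D ∈ ℤ be channel parameters. For each k ∈ ℤ and i ∈ ℤ let a_k[i] ∈ ℂ be a finitely supported array of symbols with a_{k+N}[i] = a_k[i]. Define the transmitted signal s[n] = ∑_{i∈ℤ} ∑_{k=0}^{N−1} a_k[i]·v[n−iK]·exp(2πi k(n−iK)/N), the received signal s_r[n] = ∑_{l=0}^{D} r_l·s[n−d_l], and the demultiplexed symbols ã_k[i] = ∑_{n∈ℤ} w[iK−n]·exp(2πi k(iK−n)/N)·s_r[n]. Then for every k ∈ {0,…,N−1} and i ∈ ℤ: ã_k[i] = a_k[i]·F_k + ∑_{(p,q)≠(0,0), 0≤p≤N−1, q∈ℤ} a_{k+p}[i+q]·I_k(p,q), where F_k = 1 + ∑_{l=1}^{D} r_l·exp(−2πi k d_l/N)·A_{v,w}(d_l,0) and I_k(p,q) = exp(−2πi (k+p)qK/N)·( A_{v,w}(qK, p) + ∑_{l=1}^{D} r_l·exp(−2πi (p+k)d_l/N)·A_{v,w}(qK+d_l,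 p) ). -/

import Mathlib

/-!
Demultiplexing is linear in the received signal and, as `w` has finite support, it is a finite sum.
It therefore commutes with the series over the frames and may be applied separately to each pulse
`n ↦ v[n−y]·e(m(n−y))`, where `e(t) = exp(2πi t/N)`, `m` is the carrier and `y = jK + d_l`. In frame
`i` the result depends on the relative delay `x = y − iK` only and equals `e(−mx)·A_{v,w}(x, m−k)`.
Together with the symbol `a_m[j]` this is `N`-periodic in `m`, so the sum over the carriers may
start at `m = k` instead of `m = 0`, which gives `ã_k[i] = ∑_{q,p} a_{k+p}[i+q]·I_k(p,q)`. Finally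
`I_k(0,0) = F_k`, as `A_{v,w}(0,0) = 1`.
-/

open Complex

/-- The crossambiguity function
`A_{v,w}(x,y) = ∑_{n∈ℤ} v[n−x]·w[−n]·exp(2πi y n/N)`. -/
noncomputable def crossamb (N : ℕ) (v w : ℤ → ℂ) (x y : ℤ) : ℂ :=
  ∑' n : ℤ, v (n - x) * w (-n) * Complex.exp (2 * Real.pi * Complex.I * (y : ℂ) * (n : ℂ) / N)

theorem sum_fin_add_of_periodic {M : Type*} [AddCommMonoid M] {N : ℕ} [NeZero N] {f : ℤ → M}
    (hf : Function.Periodic f N) (k : ℤ) : ∑ p : Fin N, f (k + p) = ∑ p : Fin N, f p := by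
  have f_eq_val (m : ℤ) : f m = f (m : ZMod N).val := by
    rw [ZMod.val_intCast, Int.emod_def, mul_comm, ← smul_eq_mul, hf.sub_zsmul_eq]
  have sum_eq (c : ℤ) : ∑ p : Fin N, f (c + p) = ∑ z : ZMod N, f ((c + z : ZMod N).val) := by
    rw [← (ZMod.finEquiv N).toEquiv.sum_comp]
    refine Fintype.sum_congr _ _ fun p => ?_
    have finEquiv_eq : ZMod.finEquiv N p = ((p : ℕ) : ZMod N) := by
      obtain _ | n := N
      · exact p.elim0
      · exact (Fin.cast_val_eq_self p).symm
    simp [f_eq_val (c + p), finEquiv_eq]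
  calc ∑ p : Fin N, f (k + p)
      = ∑ z : ZMod N, f ((k + z : ZMod N).val) := sum_eq k
    _ = ∑ z : ZMod N, f z.val :=
        Equiv.sum_comp (Equiv.addLeft (k : ZMod N)) fun z : ZMod N => f z.val
    _ = ∑ p : Fin N, f p := by simpa using (sum_eq 0).symm

theorem eq_add_tsum_ite_of_hasSum {ι κ E : Type*} [Fintype ι] [DecidableEq ι] [DecidableEq κ]
    [AddCommGroup E] [TopologicalSpace E] [IsTopologicalAddGroup E] [T2Space E]
    {f : ι → κ → E} {S : E} (hf : HasSum (fun q => ∑ p, f p q) S) (p₀ : ι) (q₀ : κ) :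
    S = f p₀ q₀ + ∑' q, ∑ p, if p = p₀ ∧ q = q₀ then 0 else f p q := by
  have sum_ite_eq_sub (q : κ) : (∑ p, if p = p₀ ∧ q = q₀ then 0 else f p q) =
      ∑ p, f p q - if q = q₀ then f p₀ q₀ else 0 := by
    by_cases hq : q = q₀
    · simp [hq, ← Finset.sum_erase_eq_sub, Finset.sum_ite, Finset.filter_ne']
    · simp [hq]
  simp_rw [sum_ite_eq_sub]
  rw [(hf.sub (hasSum_ite_eq q₀ (f p₀ q₀))).tsum_eq, add_sub_cancel]

/-- The transmitted signal `s[n] = ∑_{i}∑_{k<N} a_k[i]·v[n−iK]·exp(2πi k(n−iK)/N)` of an OFDM system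
with `N` channels, frame interval `K`, pulse `v` and symbols `a`. -/
noncomputable def transmittedSignal (N K : ℕ) (v : ℤ → ℂ) (a : ℤ → ℤ → ℂ) (n : ℤ) : ℂ :=
  ∑' i : ℤ, ∑ k : Fin N,
    a (k : ℤ) i *
      (v (n - i * K) *
        Complex.exp (2 * Real.pi * Complex.I * ((k : ℕ) : ℂ) * ((n - i * (K : ℤ) : ℤ) : ℂ) / N))

/-- The response `∑_{l=0}^{D} r_l·s[n−d_l]` to the signal `s` of a multipath channel with taps `r`
and delays `d`. -/
def multipathSignal (D : ℕ) (r : ℕ → ℂ) (d : ℕ → ℤ) (s : ℤ → ℂ) (n : ℤ) : ℂ :=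
  ∑ l ∈ Finset.range (D + 1), r l * s (n - d l)

/-- The symbol `∑_n w[iK−n]·exp(2πi k(iK−n)/N)·s[n]` which the receiver with window `w` extracts
from the signal `s` on channel `k` in frame `i`. -/
noncomputable def demultiplexedSymbol (N K : ℕ) (w s : ℤ → ℂ) (k : ℕ) (i : ℤ) : ℂ :=
  ∑' n : ℤ,
    w (i * K - n) *
        Complex.exp (2 * Real.pi * Complex.I * (k : ℂ) * ((i * (K : ℤ) - n : ℤ) : ℂ) / N) *
      s n

/-- The fading factor `F_k` of channel `k`; the summand `1` is the contribution of the direct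
path `l = 0`. -/
noncomputable def fadingFactor (N : ℕ) (v w : ℤ → ℂ) (D : ℕ) (r : ℕ → ℂ) (d : ℕ → ℤ) (k : ℕ) : ℂ :=
  1 + ∑ l ∈ Finset.Icc 1 D,
    r l * Complex.exp (-(2 * Real.pi * Complex.I) * (k : ℂ) * ((d l : ℤ) : ℂ) / N) *
      crossamb N v w (d l) 0

/-- The coefficient `I_k(p,q)` with which the symbol on channel `k + p` in frame `i + q` interferes
with the one on channel `k` in frame `i`. -/
noncomputable def interferenceCoeff (N K : ℕ) (v w : ℤ → ℂ) (D : ℕ) (r : ℕ → ℂ) (d : ℕ → ℤ)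
    (k p : ℕ) (q : ℤ) : ℂ :=
  Complex.exp (-(2 * Real.pi * Complex.I) * ((k : ℂ) + (p : ℂ)) * (q : ℂ) * (K : ℂ) / N) *
    (crossamb N v w (q * K) (p : ℤ) +
      ∑ l ∈ Finset.Icc 1 D,
        r l *
            Complex.exp (-(2 * Real.pi * Complex.I) * ((p : ℂ) + (k : ℂ)) * ((d l : ℤ) : ℂ) / N) *
          crossamb N v w (q * K + d l) (p : ℤ))

theorem interferenceCoeff_zero_zero (N K : ℕ) {v w : ℤ → ℂ} (hA : crossamb N v w 0 0 = 1)
    (D : ℕ) (r : ℕ → ℂ) (d : ℕ → ℤ) (k : ℕ) :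
    interferenceCoeff N K v w D r d k 0 0 = fadingFactor N v w D r d k := by
  simp [interferenceCoeff, fadingFactor, hA]

/-- The additive character `t ↦ exp(2πi t/N)` of `ℤ`. -/
noncomputable def carrierChar (N : ℕ) [NeZero N] : AddChar ℤ ℂ :=
  ZMod.stdAddChar.compAddMonoidHom (Int.castAddHom (ZMod N))

theorem exp_eq_carrierChar (N : ℕ) [NeZero N] {z : ℂ} {t : ℤ} (hz : z = 2 * Real.pi * I * t / N) :
    exp z = carrierChar N t := by
  rw [hz, ← ZMod.stdAddChar_coe]
  rfl

section

variable {N : ℕ} [NeZero N]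

theorem norm_carrierChar (t : ℤ) : ‖carrierChar N t‖ = 1 :=
  Circle.norm_coe _

theorem carrierChar_add_natCast_mul (t x : ℤ) : carrierChar N (t + N * x) = carrierChar N t := by
  simp [carrierChar]

theorem crossamb_eq_tsum_carrierChar (v w : ℤ → ℂ) (x y : ℤ) :
    crossamb N v w x y = ∑' n : ℤ, v (n - x) * w (-n) * carrierChar N (y * n) :=
  tsum_congr fun n => by rw [exp_eq_carrierChar N (t := y * n) (by push_cast; ring)]

theorem crossamb_periodic (v w : ℤ → ℂ) (x : ℤ) : Function.Periodic (crossamb N v w x) N := by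
  intro y
  simp only [crossamb_eq_tsum_carrierChar, add_mul, carrierChar_add_natCast_mul]

theorem demultiplexedSymbol_eq_tsum_carrierChar (K : ℕ) (w s : ℤ → ℂ) (k : ℕ) (i : ℤ) :
    demultiplexedSymbol N K w s k i =
      ∑' n : ℤ, w (-n) * carrierChar N (-(k * n)) * s (i * K + n) := by
  rw [demultiplexedSymbol, ← (Equiv.addLeft (i * K : ℤ)).tsum_eq]
  refine tsum_congr fun n => ?_
  dsimp only [Equiv.coe_addLeft]
  rw [sub_add_cancel_left, exp_eq_carrierChar N (t := -(k * n)) (by push_cast; ring)]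

theorem demultiplexedSymbol_pulse (K : ℕ) (v w : ℤ → ℂ) (k : ℕ) (i m x : ℤ) :
    demultiplexedSymbol N K w
        (fun n => v (n - (i * K + x)) * carrierChar N (m * (n - (i * K + x)))) k i =
      carrierChar N (-(m * x)) * crossamb N v w x (m - k) := by
  rw [demultiplexedSymbol_eq_tsum_carrierChar, crossamb_eq_tsum_carrierChar, ← tsum_mul_left]
  refine tsum_congr fun n => ?_
  have char_mul : carrierChar N (-(k * n)) * carrierChar N (m * (n - x)) =
      carrierChar N (-(m * x)) * carrierChar N ((m - k) * n) := by
    simp only [← AddChar.map_add_eq_mul]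
    congr 1
    ring
  rw [add_sub_add_left_eq_sub]
  linear_combination v (n - x) * w (-n) * char_mul

section FiniteWindow

variable {w : ℤ → ℂ} (hw : w.support.Finite) (K k : ℕ) (i : ℤ)
include hw

theorem demultiplexedSymbol_eq_sum (s : ℤ → ℂ) :
    demultiplexedSymbol N K w s k i =
      ∑ n ∈ hw.toFinset, w n * carrierChar N (k * n) * s (i * K - n) := by
  rw [demultiplexedSymbol_eq_tsum_carrierChar, ← (Equiv.neg ℤ).tsum_eq]
  simp only [Equiv.neg_apply, neg_neg, mul_neg, ← sub_eq_add_neg]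
  exact tsum_eq_sum fun n hn => by simp_all

theorem demultiplexedSymbol_sum {ι : Type*} (t : Finset ι) (c : ι → ℂ) (f : ι → ℤ → ℂ) :
    demultiplexedSymbol N K w (fun n => ∑ x ∈ t, c x * f x n) k i =
      ∑ x ∈ t, c x * demultiplexedSymbol N K w (f x) k i := by
  simp only [demultiplexedSymbol_eq_sum hw, Finset.mul_sum, mul_left_comm (c _)]
  exact Finset.sum_comm

theorem hasSum_demultiplexedSymbol {ι : Type*} {f : ι → ℤ → ℂ} {s : ℤ → ℂ}
    (hf : ∀ n, HasSum (fun j => f j n) (s n)) :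
    HasSum (fun j => demultiplexedSymbol N K w (f j) k i) (demultiplexedSymbol N K w s k i) := by
  simp only [demultiplexedSymbol_eq_sum hw]
  exact hasSum_sum fun n _ => (hf _).mul_left _

end FiniteWindow

theorem hasSum_transmittedSignal {K : ℕ} {v : ℤ → ℂ} {a : ℤ → ℤ → ℂ}
    (ha : ∀ m n : ℤ, Summable fun j : ℤ => a m j * v (n - j * K)) (n : ℤ) :
    HasSum
      (fun j : ℤ => ∑ m : Fin N,
        a m j * (v (n - j * K) * carrierChar N ((m : ℤ) * (n - j * K))))
      (transmittedSignal N K v a n) := by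
  have transmittedSignal_eq : transmittedSignal N K v a n = ∑' j : ℤ, ∑ m : Fin N,
      a m j * (v (n - j * K) * carrierChar N ((m : ℤ) * (n - j * K))) :=
    tsum_congr fun j => Finset.sum_congr rfl fun m _ => by
      rw [exp_eq_carrierChar N (t := (m : ℤ) * (n - j * K)) (by push_cast; ring)]
  rw [transmittedSignal_eq]
  refine (summable_sum fun m _ => ?_).hasSum
  exact (ha m n).norm.of_norm_bounded fun j => by
    rw [← mul_assoc, norm_mul, norm_carrierChar, mul_one]

theorem sum_fin_mul_crossamb_sub (v w : ℤ → ℂ) {b : ℤ → ℂ} (hb : Function.Periodic b N)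
    (k : ℕ) (x : ℤ) :
    ∑ m : Fin N, b m * (carrierChar N (-(m * x)) * crossamb N v w x (m - k)) =
      ∑ p : Fin N, b (k + p) * (carrierChar N (-((k + p) * x)) * crossamb N v w x p) := by
  have term_periodic : Function.Periodic
      (fun m : ℤ => b m * (carrierChar N (-(m * x)) * crossamb N v w x (m - k))) N := by
    intro m
    have neg_mul_eq : -((m + N) * x) = -(m * x) + N * -x := by ring
    simp only [hb m, neg_mul_eq, carrierChar_add_natCast_mul, add_sub_right_comm,
      crossamb_periodic v w x (m - k)]
  rw [← sum_fin_add_of_periodic term_periodic k]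
  simp only [add_sub_cancel_left]

theorem hasSum_demultiplexedSymbol_delayed {K : ℕ} {v w : ℤ → ℂ} (hw : w.support.Finite)
    {a : ℤ → ℤ → ℂ} (ha : ∀ m n : ℤ, Summable fun j : ℤ => a m j * v (n - j * K))
    (ha_per : Function.Periodic a N) (k : ℕ) (i x : ℤ) :
    HasSum
      (fun q : ℤ => ∑ p : Fin N, a (k + p) (i + q) *
        (carrierChar N (-((k + p) * (q * K + x))) * crossamb N v w (q * K + x) p))
      (demultiplexedSymbol N K w (fun n => transmittedSignal N K v a (n - x)) k i) := by
  have delayed_hasSum (n : ℤ) := hasSum_transmittedSignal (N := N) ha (n - x)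
  have frames_hasSum := hasSum_demultiplexedSymbol (N := N) hw K k i delayed_hasSum
  convert (Equiv.addLeft i).hasSum_iff.mpr frames_hasSum using 2 with q
  have delay_eq (n : ℤ) : n - x - (i + q) * K = n - (i * K + (q * K + x)) := by ring
  simp only [Function.comp_apply, Equiv.coe_addLeft, delay_eq]
  rw [demultiplexedSymbol_sum hw]
  simp only [demultiplexedSymbol_pulse]
  have symbol_periodic : Function.Periodic (fun m => a m (i + q)) N :=
    ha_per.comp fun b => b (i + q)
  exact (sum_fin_mul_crossamb_sub v w symbol_periodic k _).symm

theorem interferenceCoeff_eq_sum (K : ℕ) (v w : ℤ → ℂ) (D : ℕ) {r : ℕ → ℂ} {d : ℕ → ℤ}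
    (hr0 : r 0 = 1) (hd0 : d 0 = 0) (k p : ℕ) (q : ℤ) :
    interferenceCoeff N K v w D r d k p q = ∑ l ∈ Finset.range (D + 1),
      r l * (carrierChar N (-((k + p) * (q * K + d l))) * crossamb N v w (q * K + d l) p) := by
  have frame_char : exp (-(2 * Real.pi * I) * ((k : ℂ) + (p : ℂ)) * (q : ℂ) * (K : ℂ) / N) =
      carrierChar N (-((k + p) * (q * K))) :=
    exp_eq_carrierChar N (by push_cast; ring)
  have path_char (l : ℕ) : exp (-(2 * Real.pi * I) * ((p : ℂ) + (k : ℂ)) * (d l : ℂ) / N) =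
      carrierChar N (-((k + p) * d l)) :=
    exp_eq_carrierChar N (by push_cast; ring)
  rw [Finset.range_eq_Ico, Finset.sum_eq_sum_Ico_succ_bot D.succ_pos, hr0, hd0, add_zero, one_mul,
    interferenceCoeff, frame_char, mul_add, Finset.mul_sum]
  refine congr_arg _ (Finset.sum_congr rfl fun l _ => ?_)
  rw [path_char, mul_add (_ + _ : ℤ), neg_add, AddChar.map_add_eq_mul]
  ring

theorem hasSum_demultiplexedSymbol_multipathSignal {K : ℕ} {v w : ℤ → ℂ} (hw : w.support.Finite)
    (D : ℕ) {r : ℕ → ℂ} {d : ℕ → ℤ} (hr0 : r 0 = 1) (hd0 : d 0 = 0)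
    {a : ℤ → ℤ → ℂ} (ha : ∀ m n : ℤ, Summable fun j : ℤ => a m j * v (n - j * K))
    (ha_per : Function.Periodic a N) (k : ℕ) (i : ℤ) :
    HasSum
      (fun q : ℤ => ∑ p : Fin N, a (k + p) (i + q) * interferenceCoeff N K v w D r d k p q)
      (demultiplexedSymbol N K w (multipathSignal D r d (transmittedSignal N K v a)) k i) := by
  have demux_eq := demultiplexedSymbol_sum (N := N) hw K k i (Finset.range (D + 1)) r
    fun l n => transmittedSignal N K v a (n - d l)
  have paths_hasSum := hasSum_sum fun l (_ : l ∈ Finset.range (D + 1)) =>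
    (hasSum_demultiplexedSymbol_delayed hw ha ha_per k i (d l)).mul_left (r l)
  rw [← demux_eq] at paths_hasSum
  refine paths_hasSum.congr_fun fun q => ?_
  simp only [interferenceCoeff_eq_sum K v w D hr0 hd0, Finset.mul_sum, mul_left_comm (r _)]
  exact Finset.sum_comm

end

theorem stmt15_general {N : ℕ} (hN : 0 < N) (K : ℕ) {v w : ℤ → ℂ} (hw : w.support.Finite)
    (hA00 : crossamb N v w 0 0 = 1)
    (D : ℕ) {r : ℕ → ℂ} {d : ℕ → ℤ} (hr0 : r 0 = 1) (hd0 : d 0 = 0)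
    {a : ℤ → ℤ → ℂ} (ha : ∀ m n : ℤ, Summable fun j : ℤ => a m j * v (n - j * K))
    (haper : ∀ k i : ℤ, a (k + N) i = a k i) (k : ℕ) (i : ℤ) :
    demultiplexedSymbol N K w (multipathSignal D r d (transmittedSignal N K v a)) k i =
      a k i * fadingFactor N v w D r d k +
        ∑' q : ℤ, ∑ p : Fin N, if (p : ℤ) = 0 ∧ q = 0 then 0 else
          a (k + p) (i + q) * interferenceCoeff N K v w D r d k p q := by
  have : NeZero N := ⟨hN.ne'⟩
  have total_hasSum := hasSum_demultiplexedSymbol_multipathSignal hw D hr0 hd0 ha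
    (fun m => funext (haper m)) k i
  rw [eq_add_tsum_ite_of_hasSum total_hasSum 0 0]
  simp [interferenceCoeff_zero_zero N K hA00]

/-- Decomposition of the demultiplexed symbols of an OFDM
transmission over a multipath channel into a faded symbol plus interference:
with transmitted signal `s[n] = ∑_{i}∑_{k<N} a_k[i]·v[n−iK]·exp(2πi k(n−iK)/N)`,
received signal `s_r[n] = ∑_{l=0}^{D} r_l·s[n−d_l]` (where `r_0 = 1`, `d_0 = 0`),
and demultiplexed symbols `ã_k[i] = ∑_n w[iK−n]·exp(2πi k(iK−n)/N)·s_r[n]`,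
one has, for every `k ∈ {0,…,N−1}` and `i ∈ ℤ`,
`ã_k[i] = a_k[i]·F_k + ∑_{(p,q)≠(0,0)} a_{k+p}[i+q]·I_k(p,q)` with
`F_k = 1 + ∑_{l=1}^{D} r_l·exp(−2πi k d_l/N)·A_{v,w}(d_l,0)` and
`I_k(p,q) = exp(−2πi (k+p)qK/N)·(A_{v,w}(qK,p) +
∑_{l=1}^{D} r_l·exp(−2πi (p+k)d_l/N)·A_{v,w}(qK+d_l,p))`. -/
theorem stmt15
    (N K : ℕ) (hN : 0 < N) (hNK : N ≤ K)
    (v w : ℤ → ℂ) (hv : (Function.support v).Finite) (hw : (Function.support w).Finite)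
    (hA00 : crossamb N v w 0 0 = 1)
    (D : ℕ) (r : ℕ → ℂ) (d : ℕ → ℤ) (hr0 : r 0 = 1) (hd0 : d 0 = 0)
    (a : ℤ → ℤ → ℂ)
    (hafin : ∀ k : ℤ, (Function.support (a k)).Finite)
    (haper : ∀ k i : ℤ, a (k + N) i = a k i)
    (s : ℤ → ℂ)
    (hs : ∀ n : ℤ,
        s n = ∑' i : ℤ, ∑ k : Fin N,
          a (k : ℤ) i *
            (v (n - i * K) *
              Complex.exp (2 * Real.pi * Complex.I * ((k : ℕ) : ℂ) * ((n - i * (K : ℤ) : ℤ) : ℂ) / N)))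
    (sr : ℤ → ℂ)
    (hsr : ∀ n : ℤ, sr n = ∑ l ∈ Finset.range (D + 1), r l * s (n - d l))
    (atil : Fin N → ℤ → ℂ)
    (hatil : ∀ (k : Fin N) (i : ℤ),
        atil k i = ∑' n : ℤ,
          w (i * K - n) *
              Complex.exp (2 * Real.pi * Complex.I * ((k : ℕ) : ℂ) * ((i * (K : ℤ) - n : ℤ) : ℂ) / N) *
            sr n) :
    ∀ (k : Fin N) (i : ℤ),
      atil k i =
        a (k : ℤ) i *
            (1 + ∑ l ∈ Finset.Icc 1 D,
              r l *
                  Complex.exp (-(2 * Real.pi * Complex.I) * ((k : ℕ) : ℂ) * ((d l : ℤ) : ℂ) / N) *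
                crossamb N v w (d l) 0) +
          ∑' q : ℤ, ∑ p : Fin N,
            (if (p : ℤ) = 0 ∧ q = 0 then 0
              else
                a ((k : ℤ) + (p : ℤ)) (i + q) *
                  (Complex.exp (-(2 * Real.pi * Complex.I) * (((k : ℕ) : ℂ) + ((p : ℕ) : ℂ)) * (q : ℂ) * (K : ℂ) / N) *
                    (crossamb N v w (q * K) (p : ℤ) +
                      ∑ l ∈ Finset.Icc 1 D,
                        r l *
                            Complex.exp (-(2 * Real.pi * Complex.I) * (((p : ℕ) : ℂ) + ((k : ℕ) : ℂ)) * ((d l : ℤ) : ℂ) / N) *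
                          crossamb N v w (q * K + d l) (p : ℤ)))) := by
  obtain ⟨rfl, rfl⟩ := And.intro (funext hs) (funext hsr)
  exact fun k i => (hatil k i).trans <| stmt15_general hN K hw hA00 D hr0 hd0 (fun m _ =>
    summable_of_hasFiniteSupport ((hafin m).subset (Function.support_mul_subset_left ..))) haper k i
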